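/- Let d ≥ 2, let Λ₀ = N·ℤ^{d-1} ⊂ ℝ^{d-1} be a Bravais lattice, and let H ⊂ ℝ^{d-1} be a finite set having the same symmetries as Λ₀. Fix t > 0 and any α > 0. Let b : {1,…,|H|} → H be a bijection and s_b its |H|-periodic extension. Then E^{f_α}(Λ_{s_b}) ≤ E^{f_α}(Λ_s) for every s : ℤ → H belonging to the class { s : ∃ k' ≤ |H|, ∃ b' : ℤ/k'ℤ → H, s(i) = b'(i mod k') }, i.e. among all layered configurations of period at most |H|. -/

import Mathlib

/-! Two layers interact only through the Gaussian weight of their vertical distance and the value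
`θ(x) = ∑_{p ∈ Λ₀} exp(-πα|x + p|²)` at the difference `x` of their shifts. Since `H` has the
symmetries of `Λ₀`, `θ` takes a single value `B` at all differences of distinct elements of `H`, so
the energy of a layer exceeds a quantity independent of the layering by `θ(0) - B` times the total
weight of the layers having the same shift. In a `k'`-periodic layering these include all layers
at vertical index distance divisible by `k'`; in `s_b` they are exactly those at distance divisible
by `|H| ≥ k'`. The vertical weight decreases with the distance, so `s_b` is optimal once `B ≤ θ(0)`.

The inequality `θ(x) ≤ θ(0)` needs no Poisson summation. By the parallelogram law, the product
`θ(x) θ(y)` is a sum, over the classes `c` of `Λ₀ / 2Λ₀`, of products of values at `(x ± y + c) / 2`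
of the theta function with doubled parameter. Hence, by AM-GM, `2 θ(x)² ≤ θ(0) (θ(2x) + θ(0))`, so
that `4 (θ(x) - θ(0)) ≤ θ(2x) - θ(0)`. As `θ` is bounded, `sup (θ - θ(0))` is at most a quarter of
itself, hence not positive. -/

open scoped BigOperators

section ParityClasses

variable (A : Type*) [AddCommGroup A]

/-- The subgroup `2A` of the doubles of elements of an abelian group `A`; its cosets are the parity
classes over which the addition formula for theta functions is summed. -/
abbrev doubles : AddSubgroup A :=
  (nsmulAddMonoidHom 2).range

variable {A}

lemma bijective_out_add_add_sub [IsAddTorsionFree A] :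
    Function.Bijective fun z : (A ⧸ doubles A) × A × A =>
      (z.1.out + z.2.1 + z.2.2, z.2.1 - z.2.2) := by
  constructor
  · rintro ⟨c, m, l⟩ ⟨c', m', l'⟩ h
    obtain ⟨hsum, hdiff⟩ := Prod.ext_iff.1 h
    have hout : c.out + 2 • m = c'.out + 2 • m' := by
      linear_combination (norm := module) hsum + hdiff
    have hdouble : -c.out + c'.out = 2 • (m - m') := by
      linear_combination (norm := module) -hout
    obtain rfl : c = c' := by
      rw [← QuotientAddGroup.out_eq' c, ← QuotientAddGroup.out_eq' c', QuotientAddGroup.eq]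
      exact ⟨m - m', hdouble.symm⟩
    obtain rfl : m = m' := nsmul_right_injective two_ne_zero (add_left_cancel hout)
    simpa using hdiff
  · rintro ⟨p, q⟩
    obtain ⟨m, hm⟩ : -((p + q : A) : A ⧸ doubles A).out + (p + q) ∈ doubles A :=
      QuotientAddGroup.eq.1 (QuotientAddGroup.out_eq' _)
    refine ⟨((p + q : A), m, m - q), Prod.ext ?_ (sub_sub_cancel m q)⟩
    change 2 • m = _ at hm
    linear_combination (norm := module) hm

end ParityClasses

section Theta

open Filter

/-- The Gaussian theta function `x ↦ ∑_{p ∈ L} exp(-a|x + p|²)` of a lattice `L`, as a function of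
the translation `x`. The sum converges when `L` is discrete and `0 < a`. -/
noncomputable def latticeTheta {E : Type*} [NormedAddCommGroup E] (L : Submodule ℤ E) (a : ℝ)
    (x : E) : ℝ :=
  ∑' p : L, Real.exp (-a * ‖x + p‖ ^ 2)

lemma latticeTheta_add_coe {E : Type*} [NormedAddCommGroup E] (L : Submodule ℤ E) (a : ℝ) (x : E)
    (q : L) : latticeTheta L a (x + q) = latticeTheta L a x := by
  unfold latticeTheta
  rw [← (Equiv.addLeft q).tsum_eq fun p : L => Real.exp (-a * ‖x + p‖ ^ 2)]
  simp [add_assoc]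

section NormedSpace

variable {E : Type*} [NormedAddCommGroup E] [NormedSpace ℝ E] [FiniteDimensional ℝ E]
  (L : Submodule ℤ E) [DiscreteTopology L] {a : ℝ}

lemma tendsto_norm_add_coe_cofinite_atTop (x : E) :
    Tendsto (fun p : L => ‖x + p‖) cofinite atTop :=
  (tendsto_norm_cocompact_atTop.comp
    (Homeomorph.addLeft x).isClosedEmbedding.tendsto_cocompact).comp
      (L.toAddSubgroup.tendsto_coe_cofinite_of_discrete (isDiscrete_iff_discreteTopology.2 ‹_›))

lemma summable_exp_neg_mul_norm_add_sq (ha : 0 < a) (x : E) :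
    Summable fun p : L => Real.exp (-a * ‖x + p‖ ^ 2) := by
  obtain ⟨r, hr⟩ := exists_lt (-(Module.finrank ℤ L : ℝ))
  have hdecay : (fun y : ℝ => Real.exp (-a * y ^ 2)) =O[atTop] (· ^ r) := by
    simpa using (rexp_neg_quadratic_isLittleO_rpow_atTop (neg_lt_zero.2 ha) 0 r).isBigO
  have hsum : Summable fun p : L => ‖x + p‖ ^ r := by
    simpa [add_comm] using ZLattice.summable_norm_sub_rpow L r hr (-x)
  exact summable_of_isBigO hsum (hdecay.comp_tendsto (tendsto_norm_add_coe_cofinite_atTop L x))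

lemma latticeTheta_zero_pos (ha : 0 < a) : 0 < latticeTheta L a 0 :=
  (summable_exp_neg_mul_norm_add_sq L ha 0).tsum_pos (fun _ => (Real.exp_pos _).le) 0
    (Real.exp_pos _)

-- Translate `x` to its shortest representative modulo `L`: then `‖p‖ ≤ 2‖x + p‖` for all `p ∈ L`.
lemma latticeTheta_le_latticeTheta_div_four_zero (ha : 0 < a) (x : E) :
    latticeTheta L a x ≤ latticeTheta L (a / 4) 0 := by
  obtain ⟨q, hq⟩ := (tendsto_norm_add_coe_cofinite_atTop L x).exists_forall_le
  rw [← latticeTheta_add_coe L a x q]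
  refine (summable_exp_neg_mul_norm_add_sq L ha _).tsum_le_tsum (fun p => ?_)
    (summable_exp_neg_mul_norm_add_sq L (by positivity) 0)
  have hmin : ‖x + q‖ ≤ ‖x + q + p‖ := by simpa [add_assoc] using hq (q + p)
  have hp : ‖(p : E)‖ ≤ 2 * ‖x + q + p‖ :=
    calc ‖(p : E)‖ = ‖(x + q + p) - (x + q)‖ := by simp
      _ ≤ ‖x + q + p‖ + ‖x + q‖ := norm_sub_le _ _
      _ ≤ 2 * ‖x + q + p‖ := by linarith
  rw [Real.exp_le_exp, zero_add]
  calc -a * ‖x + q + p‖ ^ 2 = -(a / 4) * (2 * ‖x + q + p‖) ^ 2 := by ring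
    _ ≤ -(a / 4) * ‖(p : E)‖ ^ 2 := by
      rw [neg_mul, neg_mul, neg_le_neg_iff]
      gcongr

lemma hasSum_exp_mul_exp (ha : 0 < a) (x y : E) :
    HasSum (fun z : L × L => Real.exp (-a * ‖x + z.1‖ ^ 2) * Real.exp (-a * ‖y + z.2‖ ^ 2))
      (latticeTheta L a x * latticeTheta L a y) :=
  have hx := summable_exp_neg_mul_norm_add_sq L ha x
  have hy := summable_exp_neg_mul_norm_add_sq L ha y
  hx.hasSum.mul hy.hasSum
    (hx.mul_of_nonneg hy (fun _ => (Real.exp_pos _).le) fun _ => (Real.exp_pos _).le)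

end NormedSpace

variable {E : Type*} [NormedAddCommGroup E] [InnerProductSpace ℝ E] [FiniteDimensional ℝ E]
  (L : Submodule ℤ E) [DiscreteTopology L] {a : ℝ}

lemma hasSum_latticeTheta_mul (ha : 0 < a) (x y : E) :
    HasSum (fun c : L ⧸ doubles L =>
      latticeTheta L (2 * a) ((2 : ℝ)⁻¹ • (x + y + (c.out : L))) *
        latticeTheta L (2 * a) ((2 : ℝ)⁻¹ • (x - y + (c.out : L))))
      (latticeTheta L a x * latticeTheta L a y) := by
  have : IsAddTorsionFree E := .of_isTorsionFree ℝ E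
  have : IsAddTorsionFree L := 
    L.subtype_injective.isAddTorsionFree L.subtype.toAddMonoidHom
  refine HasSum.prod_fiberwise
    ((Equiv.ofBijective _ bijective_out_add_add_sub).hasSum_iff.2 (hasSum_exp_mul_exp L ha x y))
    fun c => ?_
  convert hasSum_exp_mul_exp L (mul_pos two_pos ha) ((2 : ℝ)⁻¹ • (x + y + (c.out : L)))
    ((2 : ℝ)⁻¹ • (x - y + (c.out : L))) using 2 with z
  set u := (2 : ℝ)⁻¹ • (x + y + (c.out : L)) + z.1
  set v := (2 : ℝ)⁻¹ • (x - y + (c.out : L)) + z.2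
  have hadd : x + (c.out + z.1 + z.2 : L) = u + v := by
    push_cast
    module
  have hsub : y + (z.1 - z.2 : L) = u - v := by
    push_cast
    module
  simp only [Function.comp_apply, Equiv.ofBijective_apply, ← Real.exp_add, hadd, hsub]
  congr 1
  linear_combination -a * parallelogram_law_with_norm ℝ u v

lemma two_mul_latticeTheta_sq_le (ha : 0 < a) (x : E) :
    2 * latticeTheta L a x ^ 2 ≤
      latticeTheta L a 0 * (latticeTheta L a ((2 : ℝ) • x) + latticeTheta L a 0) := by
  have hxx := (hasSum_latticeTheta_mul L ha x x).mul_left 2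
  have hsum := (hasSum_latticeTheta_mul L ha ((2 : ℝ) • x) 0).add
    (hasSum_latticeTheta_mul L ha 0 0)
  simp only [sub_self, sub_zero, add_zero, zero_add, ← two_smul ℝ x] at hxx hsum
  have hle := hasSum_le (fun c => ?_) hxx hsum
  · linarith
  · rw [← mul_assoc, ← sq, ← sq]
    exact two_mul_le_add_sq _ _

lemma four_mul_latticeTheta_sub_le (ha : 0 < a) (x : E) :
    4 * (latticeTheta L a x - latticeTheta L a 0) ≤
      latticeTheta L a ((2 : ℝ) • x) - latticeTheta L a 0 := by
  refine le_of_mul_le_mul_left ?_ (latticeTheta_zero_pos L ha)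
  linarith [two_mul_latticeTheta_sq_le L ha x,
    two_mul_le_add_sq (latticeTheta L a x) (latticeTheta L a 0)]

theorem latticeTheta_le_latticeTheta_zero (ha : 0 < a) (x : E) :
    latticeTheta L a x ≤ latticeTheta L a 0 := by
  have hbdd : BddAbove (Set.range (latticeTheta L a)) :=
    ⟨_, Set.forall_mem_range.2 (latticeTheta_le_latticeTheta_div_four_zero L ha)⟩
  set M := ⨆ v, latticeTheta L a v
  have hle v : latticeTheta L a v ≤ M := le_ciSup hbdd v
  have hM : M ≤ latticeTheta L a 0 + (M - latticeTheta L a 0) / 4 :=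
    ciSup_le fun v => by
      linarith [four_mul_latticeTheta_sub_le L ha v, hle ((2 : ℝ) • v)]
  linarith [hle x]

end Theta

section Stacking

variable {X : Type*}

/-- The energy of the layer `h` in the stacking whose layer `k` is in state `f k`, when layers `h`
and `k` interact with energy `V (f h) (f k)` weighted by `w (h - k)`. The self-interaction `k = h`
is included. -/
noncomputable def layerEnergy (w : ℤ → ℝ) (V : X → X → ℝ) (f : ℤ → X) (h : ℤ) : ℝ :=
  ∑' k, w (h - k) * V (f h) (f k)

/-- The mean energy of the layers `1, …, n` of a stacking; it is the energy per layer of the whole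
stacking when `n` is a period of `f`. -/
noncomputable def energyPerLayer (w : ℤ → ℝ) (V : X → X → ℝ) (f : ℤ → X) (n : ℕ) : ℝ :=
  𝔼 h ∈ Finset.Icc (1 : ℤ) n, layerEnergy w V f h

variable {w : ℤ → ℝ} {V : X → X → ℝ} {A B : ℝ}

lemma tsum_indicator_dvd (w : ℤ → ℝ) {n : ℕ} (hn : n ≠ 0) :
    ∑' m, {m : ℤ | (n : ℤ) ∣ m}.indicator w m = ∑' j : ℤ, w (n * j) := by
  have hrange : {m : ℤ | (n : ℤ) ∣ m} = Set.range fun j : ℤ => (n : ℤ) * j := by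
    ext m
    simp [dvd_iff_exists_eq_mul_right, eq_comm]
  rw [← tsum_subtype, hrange,
    tsum_range w (mul_right_injective₀ (Int.natCast_ne_zero.2 hn))]

lemma tsum_indicator_dvd_le (hw : Summable w) (hw_anti : ∀ l m : ℤ, |l| ≤ |m| → w m ≤ w l)
    {k n : ℕ} (hk : k ≠ 0) (hkn : k ≤ n) :
    ∑' m, {m : ℤ | (n : ℤ) ∣ m}.indicator w m ≤ ∑' m, {m : ℤ | (k : ℤ) ∣ m}.indicator w m := by
  have hn : n ≠ 0 := by omega
  rw [tsum_indicator_dvd w hn, tsum_indicator_dvd w hk]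
  have hsum {n : ℕ} (hn : n ≠ 0) : Summable fun j : ℤ => w (n * j) :=
    hw.comp_injective (mul_right_injective₀ (Int.natCast_ne_zero.2 hn))
  refine (hsum hn).tsum_le_tsum (fun j => hw_anti _ _ ?_) (hsum hk)
  rw [abs_mul, abs_mul, Nat.abs_cast, Nat.abs_cast]
  gcongr

lemma layerEnergy_eq_add_mul_tsum_indicator (hw : Summable w) (hdiag : ∀ x, V x x = A)
    (hoff : ∀ x y, x ≠ y → V x y = B) (f : ℤ → X) (h : ℤ) :
    layerEnergy w V f h =
      B * ∑' m, w m + (A - B) * ∑' m, {m | f h = f (h - m)}.indicator w m := by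
  unfold layerEnergy
  rw [← tsum_mul_left, ← tsum_mul_left, ← (hw.mul_left B).tsum_add ((hw.indicator _).mul_left _),
    ← (Equiv.subLeft h).tsum_eq]
  refine tsum_congr fun m => ?_
  rw [Equiv.subLeft_apply, sub_sub_cancel]
  by_cases hm : f h = f (h - m)
  · simp only [← hm, hdiag, Set.indicator, Set.mem_ofPred_eq, if_true]
    ring
  · simp only [hoff _ _ hm, Set.indicator, Set.mem_ofPred_eq, if_neg hm]
    ring

lemma layerEnergy_le_of_injective (hw : Summable w) (hw_nonneg : 0 ≤ w)
    (hw_anti : ∀ l m : ℤ, |l| ≤ |m| → w m ≤ w l) (hBA : B ≤ A) (hdiag : ∀ x, V x x = A)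
    (hoff : ∀ x y, x ≠ y → V x y = B) {k n : ℕ} (hk : k ≠ 0) (hkn : k ≤ n) {b : ZMod n → X}
    (hb : Function.Injective b) (b' : ZMod k → X) (h h' : ℤ) :
    layerEnergy w V (fun i => b i) h ≤ layerEnergy w V (fun i => b' i) h' := by
  have hcoinc (m : ℤ) : b h = b (h - m : ℤ) ↔ (n : ℤ) ∣ m := by
    rw [hb.eq_iff, Int.cast_sub, eq_comm, sub_eq_self, ZMod.intCast_zmod_eq_zero_iff_dvd]
  have hcoinc' : {m : ℤ | (k : ℤ) ∣ m} ⊆ {m | b' h' = b' (h' - m : ℤ)} := fun m hm => by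
    simp [(ZMod.intCast_zmod_eq_zero_iff_dvd m k).2 hm]
  have hle := calc
    ∑' m, {m : ℤ | (n : ℤ) ∣ m}.indicator w m
        ≤ ∑' m, {m : ℤ | (k : ℤ) ∣ m}.indicator w m := tsum_indicator_dvd_le hw hw_anti hk hkn
    _ ≤ ∑' m, {m | b' h' = b' (h' - m : ℤ)}.indicator w m :=
      (hw.indicator _).tsum_le_tsum (Set.indicator_le_indicator_of_subset hcoinc' hw_nonneg)
        (hw.indicator _)
  simp only [layerEnergy_eq_add_mul_tsum_indicator hw hdiag hoff, hcoinc, add_le_add_iff_left]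
  exact mul_le_mul_of_nonneg_left hle (sub_nonneg.2 hBA)

theorem energyPerLayer_le_of_injective (hw : Summable w) (hw_nonneg : 0 ≤ w)
    (hw_anti : ∀ l m : ℤ, |l| ≤ |m| → w m ≤ w l) (hBA : B ≤ A) (hdiag : ∀ x, V x x = A)
    (hoff : ∀ x y, x ≠ y → V x y = B) {k n : ℕ} (hk : k ≠ 0) (hkn : k ≤ n) {b : ZMod n → X}
    (hb : Function.Injective b) (b' : ZMod k → X) :
    energyPerLayer w V (fun i => b i) n ≤ energyPerLayer w V (fun i => b' i) k :=
  Finset.expect_le (Finset.nonempty_Icc.2 (by omega)) fun h _ =>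
    Finset.le_expect (Finset.nonempty_Icc.2 (by omega)) fun h' _ =>
      layerEnergy_le_of_injective hw hw_nonneg hw_anti hBA hdiag hoff hk hkn hb b' h h'

lemma exists_injective_zmod_of_periodic {n : ℕ} [NeZero n] {f : ℤ → X}
    (hper : Function.Periodic f n) (hinj : Function.Injective fun j : Fin n => f (j : ℕ)) :
    ∃ b : ZMod n → X, Function.Injective b ∧ f = fun i : ℤ => b i := by
  refine ⟨fun z => f z.val, fun z z' hz => ZMod.val_injective n ?_, funext fun i => ?_⟩
  · exact Fin.ext_iff.1 (@hinj ⟨z.val, z.val_lt⟩ ⟨z'.val, z'.val_lt⟩ hz)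
  · beta_reduce
    rw [ZMod.val_intCast, Int.emod_def, mul_comm, ← smul_eq_mul, hper.sub_zsmul_eq]

lemma exists_le_forall_ne_eq {C : ℝ} (hle : ∀ x y, V x y ≤ C)
    (hconst : ∀ x y z u, x ≠ y → z ≠ u → V x y = V z u) :
    ∃ B ≤ C, ∀ x y, x ≠ y → V x y = B := by
  rcases subsingleton_or_nontrivial X with hX | hX
  · exact ⟨C, le_rfl, fun x y hxy => (hxy (Subsingleton.elim x y)).elim⟩
  · obtain ⟨z, u, hzu⟩ := exists_pair_ne X
    exact ⟨V z u, hle z u, fun x y hxy => hconst x y z u hxy hzu⟩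

end Stacking

section ColumnLattice

variable {ι : Type*} [Fintype ι] [DecidableEq ι] {N : Matrix ι ι ℝ}

/-- The columns of an invertible matrix as a basis of Euclidean space, so that Mathlib's theory of
`ℤ`-lattices spanned by bases applies to `N ℤ^ι`. -/
noncomputable def columnBasis (N : Matrix ι ι ℝ) (hN : IsUnit N.det) :
    Module.Basis ι ℝ (EuclideanSpace ℝ ι) :=
  let e := (EuclideanSpace.basisFun ι ℝ).toBasis
  e.map (N.toLinearEquiv e hN)

/-- The Bravais lattice `N ℤ^ι`, as a `ℤ`-submodule of Euclidean space. -/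
noncomputable abbrev columnLattice (N : Matrix ι ι ℝ) (hN : IsUnit N.det) :
    Submodule ℤ (EuclideanSpace ℝ ι) :=
  Submodule.span ℤ (Set.range (columnBasis N hN))

lemma columnBasis_apply (hN : IsUnit N.det) (i j : ι) : columnBasis N hN j i = N i j := by
  simp only [columnBasis, Module.Basis.map_apply, Matrix.toLinearEquiv_apply, Matrix.toLin_self]
  simp [Pi.single_apply]

lemma coe_equivFun_symm_columnBasis (hN : IsUnit N.det) (p : ι → ℤ) :
    (((columnBasis N hN).restrictScalars ℤ).equivFun.symm p : EuclideanSpace ℝ ι) =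
      WithLp.toLp 2 (N.mulVec fun j => (p j : ℝ)) := by
  ext i
  simp [Module.Basis.equivFun_symm_apply, columnBasis_apply, Matrix.mulVec, dotProduct, mul_comm]

lemma latticeTheta_columnLattice (hN : IsUnit N.det) (a : ℝ) (x : ι → ℝ) :
    latticeTheta (columnLattice N hN) a (WithLp.toLp 2 x) =
      ∑' p : ι → ℤ, Real.exp (-a * ∑ i, (x i + N.mulVec (fun j => (p j : ℝ)) i) ^ 2) := by
  unfold latticeTheta
  rw [← ((columnBasis N hN).restrictScalars ℤ).equivFun.symm.toEquiv.tsum_eq]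
  refine tsum_congr fun p => ?_
  rw [LinearEquiv.coe_toEquiv, coe_equivFun_symm_columnBasis, EuclideanSpace.real_norm_sq_eq]
  rfl

lemma latticeTheta_columnLattice_eq_tsum_range (hN : IsUnit N.det) (a : ℝ) (x : ι → ℝ) :
    latticeTheta (columnLattice N hN) a (WithLp.toLp 2 x) =
      ∑' p : Set.range fun k : ι → ℤ => N.mulVec fun i => (k i : ℝ),
        Real.exp (-a * ∑ i, ((p : ι → ℝ) i + x i) ^ 2) := by
  have hinj : Function.Injective fun k : ι → ℤ => N.mulVec fun i => (k i : ℝ) := fun k l hkl =>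
    funext fun i => Int.cast_injective (congrFun (Matrix.mulVec_injective_of_isUnit
      ((Matrix.isUnit_iff_isUnit_det N).2 hN) hkl) i)
  rw [tsum_range (fun p : ι → ℝ => Real.exp (-a * ∑ i, (p i + x i) ^ 2)) hinj,
    latticeTheta_columnLattice]
  simp only [add_comm]

/-- The horizontal factor `θ(x - y)` of the Gaussian interaction of two layers that are translates
of `N ℤ^ι` by `x` and `y`. -/
noncomputable def shiftInteraction (N : Matrix ι ι ℝ) (hN : IsUnit N.det) (a : ℝ)
    (x y : ι → ℝ) : ℝ :=
  latticeTheta (columnLattice N hN) a (WithLp.toLp 2 (x - y))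

lemma shiftInteraction_self (hN : IsUnit N.det) (a : ℝ) (x : ι → ℝ) :
    shiftInteraction N hN a x x = latticeTheta (columnLattice N hN) a 0 := by
  simp [shiftInteraction]

lemma shiftInteraction_eq_of_equiv (hN : IsUnit N.det) (a : ℝ) {x y w z : ι → ℝ}
    {Λ : Set (ι → ℝ)}
    (hΛ : Λ = Set.range fun k : ι → ℤ => N.mulVec fun i => (k i : ℝ)) (φ : Λ ≃ Λ)
    (hφ : ∀ p : Λ,
      ∑ i, ((p : ι → ℝ) i + x i - y i) ^ 2 = ∑ i, ((φ p : ι → ℝ) i + w i - z i) ^ 2) :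
    shiftInteraction N hN a x y = shiftInteraction N hN a w z := by
  subst hΛ
  simp only [shiftInteraction, latticeTheta_columnLattice_eq_tsum_range, Pi.sub_apply,
    ← add_sub_assoc]
  rw [← φ.tsum_eq fun p => Real.exp (-a * ∑ i, ((p : ι → ℝ) i + w i - z i) ^ 2)]
  exact tsum_congr fun p => by rw [hφ]

lemma layerEnergy_gaussian_shiftInteraction (hN : IsUnit N.det) (t α : ℝ) (f : ℤ → ι → ℝ) (h : ℤ) :
    layerEnergy (fun m => Real.exp (-(Real.pi * α * t ^ 2) * (m : ℝ) ^ 2))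
      (shiftInteraction N hN (Real.pi * α)) f h =
    ∑' k : ℤ, ∑' p : ι → ℤ, Real.exp (-Real.pi * α * (((h - k : ℤ) : ℝ) ^ 2 * t ^ 2
      + ∑ i, (f h i - f k i + N.mulVec (fun j => (p j : ℝ)) i) ^ 2)) := by
  refine tsum_congr fun k => ?_
  rw [shiftInteraction, latticeTheta_columnLattice, ← tsum_mul_left]
  refine tsum_congr fun p => ?_
  rw [← Real.exp_add]
  congr 1
  simp only [Pi.sub_apply]
  ring

lemma energyPerLayer_gaussian_shiftInteraction (hN : IsUnit N.det) (t α : ℝ) (f : ℤ → ι → ℝ)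
    (n : ℕ) :
    energyPerLayer (fun m => Real.exp (-(Real.pi * α * t ^ 2) * (m : ℝ) ^ 2))
      (shiftInteraction N hN (Real.pi * α)) f n =
    (1 / (n : ℝ)) * ∑ h ∈ Finset.Icc (1 : ℤ) n, ∑' k : ℤ, ∑' p : ι → ℤ,
      Real.exp (-Real.pi * α * (((h - k : ℤ) : ℝ) ^ 2 * t ^ 2
        + ∑ i, (f h i - f k i + N.mulVec (fun j => (p j : ℝ)) i) ^ 2)) := by
  rw [energyPerLayer, Finset.expect_eq_sum_div_card, Int.card_Icc, add_sub_cancel_right,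
    Int.toNat_natCast, div_eq_inv_mul, one_div]
  simp only [layerEnergy_gaussian_shiftInteraction]

end ColumnLattice

lemma summable_exp_neg_mul_int_sq {c : ℝ} (hc : 0 < c) :
    Summable fun m : ℤ => Real.exp (-c * (m : ℝ) ^ 2) := by
  refine (HurwitzKernelBounds.summable_f_int 0 0 (div_pos hc Real.pi_pos)).congr fun m => ?_
  rw [HurwitzKernelBounds.f_int, pow_zero, one_mul, add_zero]
  congr 1
  field_simp

lemma exp_neg_mul_int_sq_le {c : ℝ} (hc : 0 ≤ c) {l m : ℤ} (hlm : |l| ≤ |m|) :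
    Real.exp (-c * (m : ℝ) ^ 2) ≤ Real.exp (-c * (l : ℝ) ^ 2) := by
  have hsq : (l : ℝ) ^ 2 ≤ (m : ℝ) ^ 2 := by exact_mod_cast sq_le_sq.2 hlm
  rw [Real.exp_le_exp, neg_mul, neg_mul, neg_le_neg_iff]
  gcongr

/-- For every `α > 0`, the bijective layering `s_b` minimizes the Gaussian energy
per point among all layered configurations of period `k' ≤ |H|`, i.e. among all
`s(i) = b'(i mod k')` with `b' : ℤ/k'ℤ → H`. -/
theorem layered_theta_minimal_small_period
    (d : ℕ) (hd : 2 ≤ d)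
    (N : Matrix (Fin (d - 1)) (Fin (d - 1)) ℝ) (hN : IsUnit N.det)
    (H : Finset (Fin (d - 1) → ℝ))
    (L0 : Set (Fin (d - 1) → ℝ))
    (hL0 : L0 = {v | ∃ k : Fin (d - 1) → ℤ, v = N.mulVec (fun i => (k i : ℝ))})
    -- `H` has the same symmetries as `Λ₀`
    (hsym : ∀ x ∈ H, ∀ y ∈ H, ∀ w ∈ H, ∀ z ∈ H, x ≠ y → w ≠ z →
      ∃ φ : L0 ≃ L0, ∀ p : L0,
        ∑ i, ((p : Fin (d - 1) → ℝ) i + x i - y i) ^ 2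
          = ∑ i, ((φ p : Fin (d - 1) → ℝ) i + w i - z i) ^ 2)
    (t α : ℝ) (ht : 0 < t) (hα : 0 < α)
    -- `sb` is the `|H|`-periodic extension of a bijection `b : {1,…,|H|} → H`
    (sb : ℤ → Fin (d - 1) → ℝ)
    (hsbH : ∀ k, sb k ∈ H)
    (hsb_per : ∀ k, sb (k + (H.card : ℤ)) = sb k)
    (hsb_bij : ∃ e : Fin H.card ≃ {x // x ∈ H},
      ∀ j : Fin H.card, sb ((j : ℕ) : ℤ) = (e j : Fin (d - 1) → ℝ))
    -- `s` is a layered configuration of period `k' ≤ |H|` given by `b' : ℤ/k'ℤ → H`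
    (s : ℤ → Fin (d - 1) → ℝ)
    (k' : ℕ) (hk'pos : 0 < k') (hk' : k' ≤ H.card)
    (b' : ZMod k' → {x // x ∈ H})
    (hs : ∀ i : ℤ, s i = (b' (i : ZMod k') : Fin (d - 1) → ℝ)) :
    (1 / (H.card : ℝ)) * ∑ h ∈ Finset.Icc (1 : ℤ) (H.card : ℤ), ∑' k : ℤ,
        ∑' p : Fin (d - 1) → ℤ,
          Real.exp (-Real.pi * α * (((h - k : ℤ) : ℝ) ^ 2 * t ^ 2
            + ∑ i, (sb h i - sb k i + N.mulVec (fun j => (p j : ℝ)) i) ^ 2))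
    ≤ (1 / (k' : ℝ)) * ∑ h ∈ Finset.Icc (1 : ℤ) (k' : ℤ), ∑' k : ℤ,
        ∑' p : Fin (d - 1) → ℤ,
          Real.exp (-Real.pi * α * (((h - k : ℤ) : ℝ) ^ 2 * t ^ 2
            + ∑ i, (s h i - s k i + N.mulVec (fun j => (p j : ℝ)) i) ^ 2)) := by
  have hL0_range : L0 = Set.range fun k : Fin (d - 1) → ℤ => N.mulVec fun i => (k i : ℝ) := by
    simpa only [Set.range, eq_comm] using hL0
  have hcard : NeZero H.card := ⟨by omega⟩
  have hα' : 0 < Real.pi * α := by positivity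
  lift sb to ℤ → H using hsbH
  obtain ⟨e, he⟩ := hsb_bij
  obtain ⟨b, hb, rfl⟩ := exists_injective_zmod_of_periodic (fun k => Subtype.ext (hsb_per k))
    fun i j hij => e.injective (Subtype.ext ((he i).symm.trans (.trans (congrArg _ hij) (he j))))
  obtain rfl : s = fun i : ℤ => (b' i : Fin (d - 1) → ℝ) := funext hs
  let V (x y : H) : ℝ := shiftInteraction N hN (Real.pi * α) x y
  have hV_self (x : H) : V x x = latticeTheta (columnLattice N hN) (Real.pi * α) 0 :=
    shiftInteraction_self hN _ x
  obtain ⟨B, hB, hV_ne⟩ : ∃ B ≤ latticeTheta (columnLattice N hN) (Real.pi * α) 0,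
      ∀ x y, x ≠ y → V x y = B := by
    refine exists_le_forall_ne_eq (fun x y => latticeTheta_le_latticeTheta_zero _ hα' _)
      fun x y w z hxy hwz => ?_
    obtain ⟨φ, hφ⟩ := hsym x x.2 y y.2 w w.2 z z.2 (Subtype.coe_ne_coe.2 hxy)
      (Subtype.coe_ne_coe.2 hwz)
    exact shiftInteraction_eq_of_equiv hN _ hL0_range φ hφ
  rw [← energyPerLayer_gaussian_shiftInteraction hN, ← energyPerLayer_gaussian_shiftInteraction hN]
  exact energyPerLayer_le_of_injective (V := V) (summable_exp_neg_mul_int_sq (by positivity))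
    (fun m => (Real.exp_pos _).le) (fun l m => exp_neg_mul_int_sq_le (by positivity)) hB hV_self
    hV_ne hk'pos.ne' hk' hb b'
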